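/- For the unweighted two-dimensional step set S = {(-1,1), (1,1), (0,-1)}, the number s_n of walks of length n taking steps in S, starting at the origin, and remaining in ℕ^2 satisfies s_n ∼ (√3 / (2√π)) · 3^n / √n as n → ∞. -/

import Mathlib

open Finset Filter
open scoped Classical Real

noncomputable section

/-- The number of walks of length `n` with steps in `S`, starting at the origin and
never leaving `ℕ^d` (all partial sums have nonnegative coordinates). -/
def numWalks (d : ℕ) (S : Finset (Fin d → ℤ)) (n : ℕ) : ℕ :=
  Finset.card (Finset.univ.filter fun f : Fin n → {i // i ∈ S} =>
    ∀ m : ℕ, m ≤ n → ∀ j : Fin d,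
      0 ≤ ∑ k ∈ Finset.univ.filter (fun k : Fin n => (k : ℕ) < m), ((f k : Fin d → ℤ) j))

/-- Total weight of walks of length `n` with steps in `S` (weighted by `w`),
starting at the origin and never leaving `ℕ^d`. -/
def walkWeight (d : ℕ) (S : Finset (Fin d → ℤ)) (w : (Fin d → ℤ) → ℝ) (n : ℕ) : ℝ :=
  ∑ f : Fin n → {i // i ∈ S},
    if ∀ m : ℕ, m ≤ n → ∀ j : Fin d,
        0 ≤ ∑ k ∈ Finset.univ.filter (fun k : Fin n => (k : ℕ) < m), ((f k : Fin d → ℤ) j)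
    then ∏ k : Fin n, w (f k) else 0

/-!
Both steps that go up also move horizontally by `±1`, and the down step does not move horizontally.
Thus a quarter-plane walk with `k` up steps is a vertical half-line walk with `k` up steps together
with a horizontal half-line walk of length `k`. By the ballot theorem and the reflection principle,
a uniformly random sequence of `n` steps with `k` up steps stays in the quarter plane with
probability `max 0 ((2k - n + 1) / (k + 1)) · C(k, ⌊k/2⌋) / 2 ^ k`. After multiplication by `√n`,
this is uniformly close to a continuous function of `k / n`, so the weak law of large numbers for
the binomial distribution of `k`, in the form of Bernstein approximation, gives the limit as the
value of that function at `2 / 3`, the probability of an up step.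
-/

section Walks

variable {d n : ℕ}

/-- A finite sequence of steps in `ℤ^d` keeps a walk started at `p` in `ℕ^d`. -/
def StaysNonneg (p : Fin d → ℤ) (f : Fin n → Fin d → ℤ) : Prop :=
  ∀ m : ℕ, m ≤ n → ∀ j : Fin d, 0 ≤ p j + ∑ k : Fin n with k.val < m, f k j

/-- The number of walks of length `n` with steps in `S` that start at `p` and never leave `ℕ^d`. -/
def numWalksFrom (S : Finset (Fin d → ℤ)) (n : ℕ) (p : Fin d → ℤ) : ℕ :=
  #{f : Fin n → {i // i ∈ S} | StaysNonneg p fun k => (f k : Fin d → ℤ)}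

lemma numWalks_eq_numWalksFrom (S : Finset (Fin d → ℤ)) (n : ℕ) :
    numWalks d S n = numWalksFrom S n 0 := by
  simp only [numWalks, numWalksFrom, StaysNonneg, Pi.zero_apply, zero_add]

lemma staysNonneg_of_length_zero (p : Fin d → ℤ) (f : Fin 0 → Fin d → ℤ) :
    StaysNonneg p f ↔ ∀ j, 0 ≤ p j := by
  simp [StaysNonneg]

lemma sum_cons_filter_lt_succ (s : Fin d → ℤ) (f : Fin n → Fin d → ℤ) (m : ℕ) (j : Fin d) :
    ∑ k : Fin (n + 1) with k.val < m + 1, (Fin.cons s f : Fin (n + 1) → Fin d → ℤ) k j =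
      s j + ∑ k : Fin n with k.val < m, f k j := by
  simp [Finset.sum_filter, Fin.sum_univ_succ]

lemma staysNonneg_cons (p s : Fin d → ℤ) (f : Fin n → Fin d → ℤ) :
    StaysNonneg p (Fin.cons s f : Fin (n + 1) → Fin d → ℤ) ↔
      (∀ j, 0 ≤ p j) ∧ StaysNonneg (p + s) f := by
  constructor
  · refine fun h => ⟨fun j => by simpa using h 0 (Nat.zero_le _) j, fun m hm j => ?_⟩
    simpa only [sum_cons_filter_lt_succ, Pi.add_apply, add_assoc] using h (m + 1) (by omega) j
  · rintro ⟨hp, h⟩ (_ | m) hm j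
    · simpa using hp j
    · simpa only [sum_cons_filter_lt_succ, Pi.add_apply, add_assoc] using h m (by omega) j

lemma numWalksFrom_zero (S : Finset (Fin d → ℤ)) (p : Fin d → ℤ) :
    numWalksFrom S 0 p = if ∀ j, 0 ≤ p j then 1 else 0 := by
  simp only [numWalksFrom, staysNonneg_of_length_zero]
  split_ifs with h <;> simp [h]

lemma numWalksFrom_succ (S : Finset (Fin d → ℤ)) (n : ℕ) (p : Fin d → ℤ) :
    numWalksFrom S (n + 1) p =
      if ∀ j, 0 ≤ p j then ∑ s ∈ S, numWalksFrom S n (p + s) else 0 := by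
  have cons_coe (s : {i // i ∈ S}) (f : Fin n → {i // i ∈ S}) :
      (fun k => ((Fin.consEquiv fun _ => {i // i ∈ S}) (s, f) k : Fin d → ℤ)) =
        Fin.cons (s : Fin d → ℤ) fun k => (f k : Fin d → ℤ) := by
    funext k
    cases k using Fin.cases <;> rfl
  simp only [numWalksFrom, Finset.card_filter]
  rw [← (Fin.consEquiv fun _ => {i // i ∈ S}).sum_comp, Fintype.sum_prod_type]
  simp only [cons_coe, staysNonneg_cons]
  split_ifs with h
  · simp only [h, implies_true, true_and]
    exact Finset.sum_coe_sort S fun s =>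
      ∑ f : Fin n → {i // i ∈ S}, if StaysNonneg (p + s) fun k => (f k : Fin d → ℤ) then 1 else 0
  · simp [h]

end Walks

/-- The number of `±1` walks of length `n` with exactly `k` up steps that start at height `y` and
never become negative, computed by recursion on the first step. -/
def ballotNumber : ℕ → ℕ → ℤ → ℕ
  | 0, 0, y => if 0 ≤ y then 1 else 0
  | 0, _ + 1, _ => 0
  | n + 1, 0, y => if 0 ≤ y then ballotNumber n 0 (y - 1) else 0
  | n + 1, k + 1, y =>
    if 0 ≤ y then ballotNumber n k (y + 1) + ballotNumber n (k + 1) (y - 1) else 0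

lemma ballotNumber_of_neg (n k : ℕ) {y : ℤ} (hy : y < 0) : ballotNumber n k y = 0 := by
  rcases n with _ | n <;> rcases k with _ | k <;> simp [ballotNumber, hy]

lemma ballotNumber_succ_zero {y : ℤ} (hy : 0 ≤ y) (n : ℕ) :
    ballotNumber (n + 1) 0 y = ballotNumber n 0 (y - 1) := if_pos hy

lemma ballotNumber_succ_succ {y : ℤ} (hy : 0 ≤ y) (n k : ℕ) :
    ballotNumber (n + 1) (k + 1) y = ballotNumber n k (y + 1) + ballotNumber n (k + 1) (y - 1) :=
  if_pos hy

lemma ballotNumber_of_length_lt {n k : ℕ} (hnk : n < k) (y : ℤ) : ballotNumber n k y = 0 := by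
  induction n generalizing k y with
  | zero => obtain ⟨k, rfl⟩ := Nat.exists_eq_succ_of_ne_zero hnk.ne'; rfl
  | succ n ih =>
    obtain ⟨k, rfl⟩ := Nat.exists_eq_succ_of_ne_zero (Nat.ne_zero_of_lt hnk)
    simp [ballotNumber, ih (show n < k by omega), ih (show n < k + 1 by omega)]

lemma ballotNumber_of_endpoint_neg {n k : ℕ} {y : ℤ} (h : y + 2 * k < n) :
    ballotNumber n k y = 0 := by
  induction n generalizing k y with
  | zero => exact ballotNumber_of_neg 0 k (by omega)
  | succ n ih =>
    rcases k with _ | k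
    · simp [ballotNumber, ih (show y - 1 + 2 * (0 : ℕ) < n by omega)]
    · simp [ballotNumber, ih (show y + 1 + 2 * k < n by omega),
        ih (show y - 1 + 2 * (k + 1 : ℕ) < n by omega)]

-- Reflection principle. The start is written `y - 1` so that the induction also covers height `-1`,
-- where both sides vanish.
lemma ballotNumber_sub_one {n k y : ℕ} (h : n ≤ y + 2 * k) :
    (ballotNumber n k (y - 1) : ℤ) = n.choose k - n.choose (k + y) := by
  induction n generalizing k y with
  | zero => rcases k with _ | k <;> rcases y with _ | y <;> simp [ballotNumber, ← add_assoc]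
  | succ n ih =>
    rcases y with _ | y
    · simp [ballotNumber_of_neg]
    have hy : (0 : ℤ) ≤ (y + 1 : ℕ) - 1 := by simp
    have hy_down : ((y + 1 : ℕ) - 1 - 1 : ℤ) = y - 1 := by simp
    have hy_up : ((y + 1 : ℕ) - 1 + 1 : ℤ) = (y + 2 : ℕ) - 1 := by push_cast; ring
    rcases k with _ | k
    · have hny : n.choose (y + 1) = 0 := Nat.choose_eq_zero_of_lt (by omega)
      simp only [ballotNumber_succ_zero hy, hy_down, ih (show n ≤ y + 2 * 0 by omega),
        Nat.choose_zero_right, zero_add, Nat.choose_succ_succ', hny, add_zero]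
    · rw [ballotNumber_succ_succ hy, hy_down, hy_up, Nat.cast_add, ih (by omega), ih (by omega),
        show k + 1 + (y + 1) = k + (y + 1) + 1 by ring, show k + 1 + y = k + (y + 1) by ring,
        show k + (y + 2) = k + (y + 1) + 1 by ring, Nat.choose_succ_succ', Nat.choose_succ_succ']
      push_cast
      ring

lemma ballotNumber_zero_right_eq_sub {n k : ℕ} (h : n ≤ 2 * k + 1) :
    (ballotNumber n k 0 : ℤ) = n.choose k - n.choose (k + 1) := by
  simpa using ballotNumber_sub_one (y := 1) (k := k) (show n ≤ 1 + 2 * k by omega)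

lemma sum_ballotNumber_succ_mul (n : ℕ) (y : ℤ) (f : ℕ → ℕ) :
    ∑ k ∈ range (n + 2), ballotNumber (n + 1) k y * f k =
      if 0 ≤ y then
        ∑ k ∈ range (n + 1), ballotNumber n k (y + 1) * f (k + 1) +
          ∑ k ∈ range (n + 1), ballotNumber n k (y - 1) * f k
      else 0 := by
  split_ifs with hy
  · have down : ∑ k ∈ range (n + 1), ballotNumber n k (y - 1) * f k =
        ∑ k ∈ range (n + 2), ballotNumber n k (y - 1) * f k := by
      rw [Finset.sum_range_succ _ (n + 1), ballotNumber_of_length_lt (by omega), zero_mul, add_zero]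
    rw [down, Finset.sum_range_succ' _ (n + 1), Finset.sum_range_succ' _ (n + 1)]
    simp only [ballotNumber_succ_succ hy, ballotNumber_succ_zero hy, add_mul,
      Finset.sum_add_distrib, add_assoc]
  · simp [ballotNumber_of_neg _ _ (not_le.1 hy)]

/-- The number of `±1` walks of length `n` that start at height `x` and never become negative,
summed over the number `k` of up steps. -/
def numHalfLineWalks (n : ℕ) (x : ℤ) : ℕ :=
  ∑ k ∈ range (n + 1), ballotNumber n k x

lemma numHalfLineWalks_of_neg (n : ℕ) {x : ℤ} (hx : x < 0) : numHalfLineWalks n x = 0 :=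
  Finset.sum_eq_zero fun k _ => ballotNumber_of_neg n k hx

lemma numHalfLineWalks_succ (n : ℕ) (x : ℤ) :
    numHalfLineWalks (n + 1) x =
      if 0 ≤ x then numHalfLineWalks n (x + 1) + numHalfLineWalks n (x - 1) else 0 := by
  simpa [numHalfLineWalks] using sum_ballotNumber_succ_mul n x fun _ => 1

lemma numHalfLineWalks_zero_right (n : ℕ) : numHalfLineWalks n 0 = n.choose (n / 2) := by
  have low : ∑ k ∈ range ((n + 1) / 2), (ballotNumber n k 0 : ℤ) = 0 :=
    Finset.sum_eq_zero fun k hk => by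
      rw [Finset.mem_range] at hk
      exact_mod_cast ballotNumber_of_endpoint_neg (show 0 + 2 * (k : ℤ) < n by omega)
  have high : ∑ k ∈ Ico ((n + 1) / 2) (n + 1), (ballotNumber n k 0 : ℤ) =
      n.choose ((n + 1) / 2) := by
    have telescope := Finset.sum_Ico_sub (fun k => -(n.choose k : ℤ))
      (show (n + 1) / 2 ≤ n + 1 by omega)
    simp only [Nat.choose_succ_self, Nat.cast_zero, neg_zero, zero_add,
      sub_neg_eq_add, neg_add_eq_sub] at telescope
    rw [← telescope]
    refine Finset.sum_congr rfl fun k hk => ballotNumber_zero_right_eq_sub ?_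
    have := (Finset.mem_Ico.1 hk).1
    omega
  have sum_eq := Finset.sum_range_add_sum_Ico (fun k => (ballotNumber n k 0 : ℤ))
    (show (n + 1) / 2 ≤ n + 1 by omega)
  rw [low, high, zero_add] at sum_eq
  rw [← Nat.choose_symm (Nat.div_le_self n 2), show n - n / 2 = (n + 1) / 2 by omega]
  exact_mod_cast sum_eq.symm

/-- The steps `(-1, 1)`, `(1, 1)` and `(0, -1)`. -/
abbrev driftSteps : Finset (Fin 2 → ℤ) := {![-1, 1], ![1, 1], ![0, -1]}

lemma sum_driftSteps (g : (Fin 2 → ℤ) → ℕ) :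
    ∑ s ∈ driftSteps, g s = g ![-1, 1] + g ![1, 1] + g ![0, -1] := by
  rw [Finset.sum_insert (by decide), Finset.sum_insert (by decide), Finset.sum_singleton, add_assoc]

lemma numWalksFrom_driftSteps (n : ℕ) (x y : ℤ) :
    numWalksFrom driftSteps n ![x, y] =
      ∑ k ∈ range (n + 1), ballotNumber n k y * numHalfLineWalks k x := by
  induction n generalizing x y with
  | zero =>
    by_cases hx : 0 ≤ x <;> by_cases hy : 0 ≤ y <;>
      simp [numWalksFrom_zero, numHalfLineWalks, ballotNumber, Fin.forall_fin_two, hx, hy]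
  | succ n ih =>
    rw [numWalksFrom_succ, sum_ballotNumber_succ_mul, sum_driftSteps]
    by_cases hx : 0 ≤ x
    · simp [Fin.forall_fin_two, hx, ih, numHalfLineWalks_succ, mul_add, Finset.sum_add_distrib,
        ← sub_eq_add_neg, add_comm]
    · simp [Fin.forall_fin_two, hx, numHalfLineWalks_succ, numHalfLineWalks_of_neg _ (not_le.1 hx)]

/-- The probability that a uniformly random `±1` sequence of length `n` with `k` up steps has no
negative partial sum, in the closed form given by the ballot theorem. -/
def ballotProbability (n k : ℕ) : ℝ :=
  max 0 (2 * (k : ℝ) - n + 1) / (k + 1)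

lemma ballotProbability_of_lt {n k : ℕ} (h : 2 * k < n) : ballotProbability n k = 0 := by
  have : (2 * k + 1 : ℝ) ≤ n := by exact_mod_cast h
  rw [ballotProbability, max_eq_left (by linarith), zero_div]

lemma ballotProbability_of_le {n k : ℕ} (h : n ≤ 2 * k + 1) :
    ballotProbability n k = (2 * k - n + 1) / (k + 1) := by
  have : (n : ℝ) ≤ 2 * k + 1 := by exact_mod_cast h
  rw [ballotProbability, max_eq_right (by linarith)]

lemma ballotProbability_nonneg (n k : ℕ) : 0 ≤ ballotProbability n k := by
  unfold ballotProbability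
  positivity

lemma ballotProbability_le_one {n k : ℕ} (h : k ≤ n) : ballotProbability n k ≤ 1 := by
  have : (k : ℝ) ≤ n := by exact_mod_cast h
  exact div_le_one_of_le₀ (max_le (by positivity) (by linarith)) (by positivity)

lemma ballotNumber_zero_right_eq_choose_mul (n k : ℕ) :
    (ballotNumber n k 0 : ℝ) = n.choose k * ballotProbability n k := by
  rcases le_or_gt n (2 * k + 1) with h | h
  · have h_sub : (ballotNumber n k 0 : ℝ) = n.choose k - n.choose (k + 1) := by
      exact_mod_cast ballotNumber_zero_right_eq_sub h
    have h_choose : (n.choose (k + 1) : ℝ) * (k + 1) = n.choose k * (n - k) := by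
      rcases le_or_gt k n with hk | hk
      · exact_mod_cast Nat.choose_succ_right_eq n k
      · simp [Nat.choose_eq_zero_of_lt, hk, hk.trans (Nat.lt_succ_self k)]
    rw [h_sub, ballotProbability_of_le h]
    field_simp
    linarith
  · rw [ballotNumber_of_endpoint_neg (by omega), ballotProbability_of_lt (by omega), Nat.cast_zero,
      mul_zero]

/-- The probability that a uniformly random `±1` walk of length `k` started at `0` never becomes
negative, in closed form. -/
def halfLineProbability (k : ℕ) : ℝ :=
  k.choose (k / 2) / 2 ^ k

lemma numHalfLineWalks_zero_right_eq_mul (k : ℕ) :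
    (numHalfLineWalks k 0 : ℝ) = 2 ^ k * halfLineProbability k := by
  rw [numHalfLineWalks_zero_right, halfLineProbability]
  field_simp

/-- The probability `2 / 3` that a uniformly random step of `driftSteps` goes up. -/
def upProbability : unitInterval := ⟨2 / 3, by norm_num, by norm_num⟩

lemma numWalks_driftSteps_div_three_pow (n : ℕ) :
    (numWalks 2 driftSteps n : ℝ) / 3 ^ n =
      ∑ k : Fin (n + 1), bernstein n k upProbability *
        (ballotProbability n k * halfLineProbability k) := by
  have origin : (0 : Fin 2 → ℤ) = ![0, 0] := by decide
  rw [numWalks_eq_numWalksFrom, origin, numWalksFrom_driftSteps, Finset.sum_range]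
  push_cast
  rw [Finset.sum_div]
  refine Finset.sum_congr rfl fun k _ => ?_
  have three_pow : (3 : ℝ) ^ n = 3 ^ (k : ℕ) * 3 ^ (n - k) := by
    rw [← pow_add, Nat.add_sub_cancel' k.is_le]
  rw [bernstein_apply, ballotNumber_zero_right_eq_choose_mul, numHalfLineWalks_zero_right_eq_mul,
    three_pow, upProbability, show (1 - 2 / 3 : ℝ) = 1 / 3 by norm_num, div_pow, div_pow, one_pow]
  field_simp

lemma sq_centralBinom_div_four_pow (m : ℕ) :
    ((m.centralBinom : ℝ) / 4 ^ m) ^ 2 = (Real.Wallis.W m)⁻¹ / (2 * m + 1) := by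
  have h : (m.centralBinom : ℝ) = (2 * m).factorial / m.factorial ^ 2 := by
    rw [Nat.centralBinom_eq_two_mul_choose, Nat.cast_choose ℝ (by omega : m ≤ 2 * m),
      show 2 * m - m = m by omega, sq]
  rw [h, Real.Wallis.W_eq_factorial_ratio, pow_mul, show (2 : ℝ) ^ 4 = 4 ^ 2 by norm_num,
    pow_right_comm]
  field_simp

lemma tendsto_sqrt_mul_centralBinom_div_four_pow :
    Tendsto (fun m : ℕ => √(2 * m + 1) * (m.centralBinom / 4 ^ m)) atTop (nhds √(2 / π)) := by
  have h := (Real.Wallis.tendsto_W_nhds_pi_div_two.inv₀ (by positivity)).sqrt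
  rw [inv_div] at h
  refine h.congr fun m => ?_
  have : (Real.Wallis.W m)⁻¹ = (2 * m + 1) * (m.centralBinom / 4 ^ m) ^ 2 := by
    rw [sq_centralBinom_div_four_pow]
    field_simp
  rw [this, Real.sqrt_mul (by positivity), Real.sqrt_sq (by positivity)]

lemma halfLineProbability_eq_centralBinom (k : ℕ) :
    halfLineProbability k = ((k + 1) / 2).centralBinom / 4 ^ ((k + 1) / 2) := by
  obtain ⟨m, rfl | rfl⟩ := Nat.even_or_odd' k
  · rw [halfLineProbability, Nat.centralBinom_eq_two_mul_choose, show (2 * m + 1) / 2 = m by omega,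
      show 2 * m / 2 = m by omega, pow_mul]
    norm_num
  · rw [halfLineProbability, Nat.centralBinom_eq_two_mul_choose,
      show (2 * m + 1 + 1) / 2 = m + 1 by omega, show (2 * m + 1) / 2 = m by omega,
      show 2 * (m + 1) = 2 * m + 1 + 1 by ring, Nat.choose_succ_succ', Nat.choose_symm_half,
      show (4 : ℝ) = 2 ^ 2 by norm_num, ← pow_mul, show 2 * (m + 1) = 2 * m + 1 + 1 by ring,
      pow_succ _ (2 * m + 1)]
    push_cast
    field_simp
    ring

lemma tendsto_div_two_mul_ceil_half_add_one :
    Tendsto (fun k : ℕ => (k : ℝ) / (2 * ((k + 1) / 2 : ℕ) + 1)) atTop (nhds 1) := by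
  refine tendsto_of_tendsto_of_tendsto_of_le_of_le (tendsto_natCast_div_add_atTop (2 : ℝ))
    tendsto_const_nhds (fun k => ?_) fun k => ?_
  · have : (2 * ((k + 1) / 2 : ℕ) + 1 : ℝ) ≤ k + 2 := by
      exact_mod_cast (show 2 * ((k + 1) / 2) + 1 ≤ k + 2 by omega)
    dsimp only
    gcongr
  · have : (k : ℝ) ≤ 2 * ((k + 1) / 2 : ℕ) + 1 := by
      exact_mod_cast (show k ≤ 2 * ((k + 1) / 2) + 1 by omega)
    exact div_le_one_of_le₀ this (by positivity)

lemma tendsto_sqrt_mul_halfLineProbability :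
    Tendsto (fun k : ℕ => √k * halfLineProbability k) atTop (nhds √(2 / π)) := by
  have ceil_half : Tendsto (fun k : ℕ => (k + 1) / 2) atTop atTop :=
    (Nat.tendsto_div_const_atTop two_ne_zero).comp (tendsto_add_atTop_nat 1)
  have h := tendsto_div_two_mul_ceil_half_add_one.sqrt.mul
    (tendsto_sqrt_mul_centralBinom_div_four_pow.comp ceil_half)
  rw [Real.sqrt_one, one_mul] at h
  refine h.congr fun k => ?_
  rw [Function.comp_apply, ← halfLineProbability_eq_centralBinom, Real.sqrt_div k.cast_nonneg,
    ← mul_assoc, div_mul_cancel₀ _ (by positivity)]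

lemma tendsto_sum_bernstein_mul {F : ℕ → ℕ → ℝ} {g : ℝ → ℝ} (hg : ContinuousOn g unitInterval)
    (hF : ∀ ε > 0, ∀ᶠ n : ℕ in atTop, ∀ k ≤ n, |F n k - g (k / n)| ≤ ε) (t : unitInterval) :
    Tendsto (fun n : ℕ => ∑ k : Fin (n + 1), bernstein n k t * F n k) atTop (nhds (g t)) := by
  have approx : Tendsto (fun n : ℕ => ∑ k : Fin (n + 1), bernstein n k t * g ((k : ℝ) / n)) atTop
      (nhds (g t)) := by
    have h := bernsteinApproximation_uniform ⟨unitInterval.domRestrict g, hg.domRestrict⟩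
    refine (((continuous_eval_const t).tendsto _).comp h).congr fun n => ?_
    rw [Function.comp_apply, bernsteinApproximation.apply]
    rfl
  have error : Tendsto (fun n : ℕ => ∑ k : Fin (n + 1), bernstein n k t * (F n k - g ((k : ℝ) / n)))
      atTop (nhds 0) := by
    rw [Metric.tendsto_nhds]
    intro ε hε
    filter_upwards [hF (ε / 2) (half_pos hε)] with n hn
    rw [Real.dist_0_eq_abs]
    calc |∑ k : Fin (n + 1), bernstein n k t * (F n k - g ((k : ℝ) / n))|
        ≤ ∑ k : Fin (n + 1), |bernstein n k t * (F n k - g ((k : ℝ) / n))| :=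
          Finset.abs_sum_le_sum_abs _ _
      _ ≤ ∑ k : Fin (n + 1), bernstein n k t * (ε / 2) := by
          gcongr with k
          rw [abs_mul, abs_of_nonneg bernstein_nonneg]
          gcongr
          exact hn k k.is_le
      _ = ε / 2 := by rw [← Finset.sum_mul, bernstein.probability, one_mul]
      _ < ε := half_lt_self hε
  simpa only [← Finset.sum_add_distrib, ← mul_add, sub_add_cancel, zero_add] using error.add approx

/-- The limit of `√n` times the probability that a random sequence of `n` steps of `driftSteps` with
`k` up steps stays in the quarter plane, as `k / n → t`. Clamping `t` to `[1 / 2, ∞)` makes the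
value zero for `t ≤ 1 / 2`. -/
def limitProfile (t : ℝ) : ℝ :=
  (2 * max t (1 / 2) - 1) / max t (1 / 2) * √(2 / (π * max t (1 / 2)))

lemma continuous_limitProfile : Continuous limitProfile := by
  have h (t : ℝ) : max t (1 / 2) ≠ 0 := by positivity
  have hπ (t : ℝ) : π * max t (1 / 2) ≠ 0 := by positivity
  unfold limitProfile
  fun_prop (disch := assumption)

lemma limitProfile_of_le_half {t : ℝ} (ht : t ≤ 1 / 2) : limitProfile t = 0 := by
  rw [limitProfile, max_eq_right ht]
  norm_num

lemma limitProfile_of_half_le {t : ℝ} (ht : 1 / 2 ≤ t) :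
    limitProfile t = (2 * t - 1) / t * √(2 / (π * t)) := by
  rw [limitProfile, max_eq_left ht]

lemma limitProfile_two_thirds : limitProfile (2 / 3) = √3 / (2 * √π) := by
  rw [limitProfile_of_half_le (by norm_num), show 2 / (π * (2 / 3)) = 3 / π by field_simp,
    Real.sqrt_div (by norm_num)]
  ring

lemma abs_ballotProbability_sub_le {n k : ℕ} (hk : 0 < k) (hkn : k ≤ n) (hn : n ≤ 2 * k) :
    |ballotProbability n k - (2 * k - n) / k| ≤ 2 / n := by
  have hk' : (0 : ℝ) < k := by exact_mod_cast hk
  have hkn' : (k : ℝ) ≤ n := by exact_mod_cast hkn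
  have hn' : (n : ℝ) ≤ 2 * k := by exact_mod_cast hn
  have h_sub : ballotProbability n k - (2 * k - n) / k = (n - k) / (k * (k + 1)) := by
    rw [ballotProbability_of_le (by omega)]
    field_simp
    ring
  rw [h_sub, abs_of_nonneg (div_nonneg (by linarith) (by positivity)),
    div_le_div_iff₀ (by positivity) (by linarith)]
  nlinarith

lemma limitProfile_natCast_div {n k : ℕ} (hk : 0 < k) (hkn : k ≤ n) (hn : n ≤ 2 * k) :
    limitProfile (k / n) = √(n / k) * ((2 * k - n) / k * √(2 / π)) := by
  have hn0 : (0 : ℝ) < n := by exact_mod_cast hk.trans_le hkn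
  have hn' : (n : ℝ) ≤ 2 * k := by exact_mod_cast hn
  have half_le : (1 / 2 : ℝ) ≤ k / n := by
    rw [div_le_div_iff₀ two_pos hn0]
    linarith
  have h_sqrt : √(2 / (π * (k / n)) : ℝ) = √(n / k) * √(2 / π) := by
    rw [← Real.sqrt_mul (by positivity)]
    congr 1
    field_simp
  rw [limitProfile_of_half_le half_le, h_sqrt]
  field_simp

-- With `Q = ballotProbability n k`, `u = √k * halfLineProbability k` and their limits `q` and `c`,
-- the left side is `√(n / k) * |Q * u - q * c|`, and `Q * u - q * c = Q * (u - c) + (Q - q) * c`.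
lemma abs_sub_limitProfile_le {n k : ℕ} (hk : 0 < k) (hkn : k ≤ n) (hn : n ≤ 2 * k) :
    |√n * (ballotProbability n k * halfLineProbability k) - limitProfile (k / n)| ≤
      2 * (|√k * halfLineProbability k - √(2 / π)| + 2 / n) := by
  have hk' : (0 : ℝ) < k := by exact_mod_cast hk
  have hn' : (n : ℝ) ≤ 2 * k := by exact_mod_cast hn
  have sqrt_ratio_le : √(n / k : ℝ) ≤ 2 := by
    rw [Real.sqrt_le_left two_pos.le, div_le_iff₀ hk']
    linarith
  have const_le_one : √(2 / π) ≤ 1 :=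
    Real.sqrt_le_one.2 (div_le_one_of_le₀ Real.two_le_pi Real.pi_pos.le)
  have factor : √n * (ballotProbability n k * halfLineProbability k) =
      √(n / k) * (ballotProbability n k * (√k * halfLineProbability k)) := by
    rw [Real.sqrt_div n.cast_nonneg]
    field_simp
  rw [factor, limitProfile_natCast_div hk hkn hn, ← mul_sub, abs_mul,
    abs_of_nonneg (Real.sqrt_nonneg _)]
  have ballot_error := abs_ballotProbability_sub_le hk hkn hn
  set Q := ballotProbability n k
  set q : ℝ := (2 * k - n) / k
  set u := √k * halfLineProbability k
  set c := √(2 / π)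
  gcongr
  calc |Q * u - q * c| = |Q * (u - c) + (Q - q) * c| := by congr 1; ring
    _ ≤ |Q * (u - c)| + |(Q - q) * c| := abs_add_le _ _
    _ = Q * |u - c| + |Q - q| * c := by
        rw [abs_mul, abs_mul, abs_of_nonneg (ballotProbability_nonneg n k),
          abs_of_nonneg (Real.sqrt_nonneg _)]
    _ ≤ 1 * |u - c| + 2 / n * 1 := by
        gcongr
        exact ballotProbability_le_one hkn
    _ = |u - c| + 2 / n := by ring

lemma eventually_forall_abs_sub_limitProfile_le {ε : ℝ} (hε : 0 < ε) :
    ∀ᶠ n : ℕ in atTop, ∀ k ≤ n,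
      |√n * (ballotProbability n k * halfLineProbability k) - limitProfile (k / n)| ≤ ε := by
  obtain ⟨K, hK⟩ := Metric.tendsto_atTop.1 tendsto_sqrt_mul_halfLineProbability (ε / 4)
    (by positivity)
  have two_div : ∀ᶠ n : ℕ in atTop, (2 : ℝ) / n < ε / 4 :=
    (tendsto_const_div_atTop_nhds_zero_nat 2).eventually_lt_const (by positivity)
  filter_upwards [two_div, eventually_ge_atTop (2 * K + 1)] with n hn hKn k hkn
  rcases lt_or_ge (2 * k) n with h | h
  · have le_half : (k / n : ℝ) ≤ 1 / 2 := by
      have hn0 : (0 : ℝ) < n := by exact_mod_cast Nat.zero_lt_of_lt h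
      have : (2 * k : ℝ) ≤ n := by exact_mod_cast h.le
      rw [div_le_div_iff₀ hn0 two_pos]
      linarith
    rw [ballotProbability_of_lt h, limitProfile_of_le_half le_half]
    simpa using hε.le
  · have half_line_error := hK k (by omega)
    rw [Real.dist_eq] at half_line_error
    have total_error := abs_sub_limitProfile_le (by omega) hkn h
    linarith

lemma tendsto_sqrt_mul_numWalks_driftSteps :
    Tendsto (fun n : ℕ => √n * (numWalks 2 driftSteps n / 3 ^ n)) atTop
      (nhds (√3 / (2 * √π))) := by
  rw [← limitProfile_two_thirds]
  refine (tendsto_sum_bernstein_mul continuous_limitProfile.continuousOn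
    (fun ε hε => eventually_forall_abs_sub_limitProfile_le hε) upProbability).congr fun n => ?_
  rw [numWalks_driftSteps_div_three_pow, Finset.mul_sum]
  exact Finset.sum_congr rfl fun k _ => mul_left_comm _ _ _

/-- For the step set `{(-1,1), (1,1), (0,-1)}` in `ℤ²`, the number of quarter-plane
walks satisfies `s_n ∼ (√3/(2√π))·3^n/√n`. -/
theorem positive_drift_example_asymptotics :
    Tendsto (fun n : ℕ =>
      (numWalks 2 ({![-1, 1], ![1, 1], ![0, -1]} : Finset (Fin 2 → ℤ)) n : ℝ) /
        ((Real.sqrt 3 / (2 * Real.sqrt π)) * 3 ^ n / Real.sqrt n))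
      atTop (nhds 1) := by
  set c := √3 / (2 * √π) with hc
  have c_ne_zero : c ≠ 0 := by positivity
  have h := tendsto_sqrt_mul_numWalks_driftSteps.div_const c
  rw [← hc, div_self c_ne_zero] at h
  refine h.congr fun n => ?_
  rw [div_div_eq_mul_div (_ : ℝ) (c * 3 ^ n)]
  ring

end
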